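/- Spectral clamping is the Frobenius projection onto a spectral-norm ball. Let C ∈ ℝ^{M×M} be symmetric with spectral decomposition C = Σ_{m=1}^M λ_m v_m v_mᵀ, where {v_m} is an orthonormal basis of eigenvectors with eigenvalues {λ_m}. For r > 0, the matrix Y = Σ_{m=1}^M clamp_r(λ_m) v_m v_mᵀ satisfies ‖Y‖ ≤ r and ‖Y − C‖_F ≤ ‖X − C‖_F for every X ∈ ℝ^{M×M} with ‖X‖ ≤ r, with equality only when X = Y; i.e., Y is the unique Frobenius-norm projection of C onto the ball {X : ‖X‖ ≤ r}. -/

import Mathlib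

open Matrix

/-- The spectral (operator `ℓ²`-) norm of a real square matrix. -/
noncomputable def specNormR {M : ℕ} (X : Matrix (Fin M) (Fin M) ℝ) : ℝ :=
  ‖Matrix.toEuclideanCLM (𝕜 := ℝ) X‖

/-- The Frobenius norm `‖X‖_F = √Tr(XᵀX)` of a real square matrix. -/
noncomputable def frobNorm {M : ℕ} (X : Matrix (Fin M) (Fin M) ℝ) : ℝ :=
  Real.sqrt ((Xᵀ * X).trace)

/-- `clamp_r(λ) = min (max λ (-r)) r`. -/
def clamp (r lam : ℝ) : ℝ := min (max lam (-r)) r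

/-!
The matrices with the Frobenius norm form an inner product space in which, for orthonormal families
`u` and `v`, the rank-one matrices `uᵢ vᵢᴴ` are orthonormal and `⟪uᵢ vᵢᴴ, X⟫ = ⟪uᵢ, X vᵢ⟫`. Hence a
matrix `X` of operator norm at most `r` has all its coordinates along them in `[-r, r]`, while
clamping coefficients to `[-r, r]` is the projection onto that box. So already the box, which
contains the operator norm ball, has no point closer to `C` than the clamped matrix, and by Bessel's
inequality the latter lies in the ball. The spectral decomposition is the case `u = v`.
-/

lemma abs_clamp_le {r : ℝ} (hr : 0 ≤ r) (a : ℝ) : |clamp r a| ≤ r :=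
  abs_le.mpr ⟨le_min (le_max_right _ _) (neg_le_self hr), min_le_right _ _⟩

lemma clamp_sub_mul_sub_clamp_nonneg {r b : ℝ} (a : ℝ) (hb : |b| ≤ r) :
    0 ≤ (clamp r a - a) * (b - clamp r a) := by
  obtain ⟨hrb, hbr⟩ := abs_le.mp hb
  unfold clamp
  rcases le_total a (-r) with har | har
  · rw [max_eq_right har, min_eq_left (hrb.trans hbr)]
    exact mul_nonneg (sub_nonneg.mpr har) (sub_nonneg.mpr hrb)
  rw [max_eq_left har]
  rcases le_total a r with har' | har'
  · simp only [min_eq_left har', sub_self, zero_mul, le_refl]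
  · rw [min_eq_right har']
    exact mul_nonneg_of_nonpos_of_nonpos (sub_nonpos.mpr har') (sub_nonpos.mpr hbr)

section InnerProductSpace

open RCLike

variable {𝕜 E F ι : Type*} [RCLike 𝕜]
  [NormedAddCommGroup E] [InnerProductSpace 𝕜 E] [NormedAddCommGroup F] [InnerProductSpace 𝕜 F]

lemma norm_sub_sq_add_norm_sub_sq_le {x y c : E} (h : 0 ≤ re (inner 𝕜 (y - c) (x - y))) :
    ‖y - c‖ ^ 2 + ‖x - y‖ ^ 2 ≤ ‖x - c‖ ^ 2 := by
  have hexpand := norm_add_sq (𝕜 := 𝕜) (y - c) (x - y)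
  rw [add_comm (y - c), sub_add_sub_cancel] at hexpand
  linarith

variable [Fintype ι]

lemma re_inner_sum_sub_sum {w : ι → E} (hw : Orthonormal 𝕜 w) (s t : ι → ℝ) (x : E) :
    re (inner 𝕜 (∑ i, (t i : 𝕜) • w i - ∑ i, (s i : 𝕜) • w i) (x - ∑ i, (t i : 𝕜) • w i)) =
      ∑ i, (t i - s i) * (re (inner 𝕜 (w i) x) - t i) := by
  have hdiff : ∑ i, (t i : 𝕜) • w i - ∑ i, (s i : 𝕜) • w i =
      ∑ i, ((t i - s i : ℝ) : 𝕜) • w i := by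
    simp only [ofReal_sub, sub_smul, Finset.sum_sub_distrib]
  rw [hdiff, sum_inner, map_sum]
  refine Finset.sum_congr rfl fun i _ => ?_
  rw [inner_smul_left, conj_ofReal, re_ofReal_mul, inner_sub_right, hw.inner_right_fintype, map_sub,
    ofReal_re]

lemma norm_sq_sum_smul {u : ι → E} (hu : Orthonormal 𝕜 u) (c : ι → 𝕜) :
    ‖∑ i, c i • u i‖ ^ 2 = ∑ i, ‖c i‖ ^ 2 := by
  rw [← ofReal_inj (K := 𝕜), ofReal_pow, ← inner_self_eq_norm_sq_to_K, hu.inner_sum]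
  simp only [RCLike.conj_mul, ofReal_sum, ofReal_pow]

lemma norm_sum_smul_rankOne_le {u : ι → E} {v : ι → F} (hu : Orthonormal 𝕜 u)
    (hv : Orthonormal 𝕜 v) {c : ι → 𝕜} {r : ℝ} (hr : 0 ≤ r) (hc : ∀ i, ‖c i‖ ≤ r) :
    ‖∑ i, c i • InnerProductSpace.rankOne 𝕜 (u i) (v i)‖ ≤ r := by
  refine ContinuousLinearMap.opNorm_le_bound _ hr fun x => ?_
  refine (sq_le_sq₀ (norm_nonneg _) (by positivity)).mp ?_
  calc ‖(∑ i, c i • InnerProductSpace.rankOne 𝕜 (u i) (v i)) x‖ ^ 2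
      = ∑ i, ‖c i‖ ^ 2 * ‖inner 𝕜 (v i) x‖ ^ 2 := by
        simp only [_root_.sum_apply, _root_.smul_apply,
          InnerProductSpace.rankOne_apply, smul_smul, norm_sq_sum_smul hu, norm_mul, mul_pow]
    _ ≤ ∑ i, r ^ 2 * ‖inner 𝕜 (v i) x‖ ^ 2 := by gcongr; exact hc _
    _ = r ^ 2 * ∑ i, ‖inner 𝕜 (v i) x‖ ^ 2 := by rw [Finset.mul_sum]
    _ ≤ r ^ 2 * ‖x‖ ^ 2 := by gcongr; exact hv.sum_inner_products_le x
    _ = (r * ‖x‖) ^ 2 := by rw [mul_pow]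

end InnerProductSpace

section Frobenius

open RCLike
open scoped Matrix.Norms.Frobenius

variable {𝕜 m n ι : Type*} [RCLike 𝕜] [Fintype m] [Fintype n]

lemma frobenius_norm_sq_eq_re_trace (A : Matrix m n 𝕜) : ‖A‖ ^ 2 = re (Aᴴ * A).trace := by
  rw [frobenius_norm_def, ← Real.sqrt_eq_rpow, Real.sq_sqrt (by positivity), Finset.sum_comm]
  simp only [Real.rpow_two, trace, diag_apply, mul_apply, conjTranspose_apply, star_def, map_sum,
    RCLike.conj_mul, ← ofReal_pow, ofReal_re]

/-- The Frobenius inner product `⟪A, B⟫ = Tr(Aᴴ B)`, inducing the norm of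
`Matrix.Norms.Frobenius`. -/
noncomputable local instance frobeniusInnerProductSpace :
    InnerProductSpace 𝕜 (Matrix m n 𝕜) where
  inner A B := (Aᴴ * B).trace
  norm_sq_eq_re_inner := frobenius_norm_sq_eq_re_trace
  conj_inner_symm A B := by
    rw [starRingEnd_apply, ← trace_conjTranspose, conjTranspose_mul, conjTranspose_conjTranspose]
  add_left A B D := by rw [conjTranspose_add, Matrix.add_mul, trace_add]
  smul_left A B c := by
    rw [conjTranspose_smul, Matrix.smul_mul, trace_smul, smul_eq_mul, starRingEnd_apply]

/-- The operator norm of a rectangular matrix as a map between Euclidean spaces, kept apart from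
`‖·‖`, which is the Frobenius norm here. -/
noncomputable def euclideanOpNorm [DecidableEq n] (A : Matrix m n 𝕜) : ℝ :=
  ‖(toEuclideanLin A).toContinuousLinearMap‖

/-- The matrix `∑ᵢ sᵢ uᵢ vᵢᴴ`: a singular value decomposition when `u` and `v` are orthonormal, and
a spectral decomposition when moreover `u = v`. -/
noncomputable def sumRankOne [Fintype ι] (u : ι → EuclideanSpace 𝕜 m) (v : ι → EuclideanSpace 𝕜 n)
    (s : ι → ℝ) : Matrix m n 𝕜 :=
  ∑ i, (s i : 𝕜) • vecMulVec (u i) (star (v i))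

lemma toEuclideanLin_vecMulVec_star [DecidableEq n] (x : EuclideanSpace 𝕜 m)
    (y : EuclideanSpace 𝕜 n) :
    toEuclideanLin (vecMulVec x (star y)) = (InnerProductSpace.rankOne 𝕜 x y).toLinearMap :=
  ((LinearEquiv.symm_apply_eq _).mp (InnerProductSpace.symm_toEuclideanLin_rankOne x y)).symm

lemma inner_vecMulVec_star [DecidableEq n] (x : EuclideanSpace 𝕜 m) (y : EuclideanSpace 𝕜 n)
    (A : Matrix m n 𝕜) :
    inner 𝕜 (vecMulVec x (star y)) A = inner 𝕜 x (toEuclideanLin A y) := by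
  calc ((vecMulVec x (star y))ᴴ * A).trace
      = star (x : m → 𝕜) ⬝ᵥ A *ᵥ y := by
        rw [conjTranspose_vecMulVec, star_star, vecMulVec_mul, trace_vecMulVec, dotProduct_mulVec,
          dotProduct_comm]
    _ = inner 𝕜 x (toEuclideanLin A y) := by
        rw [EuclideanSpace.inner_eq_star_dotProduct, dotProduct_comm, ofLp_toLpLin, toLin'_apply]

lemma orthonormal_vecMulVec_star {u : ι → EuclideanSpace 𝕜 m} {v : ι → EuclideanSpace 𝕜 n}
    (hu : Orthonormal 𝕜 u) (hv : ∀ i, ‖v i‖ = 1) :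
    Orthonormal 𝕜 fun i => vecMulVec (u i) (star (v i)) := by
  classical
  rw [orthonormal_iff_ite] at hu ⊢
  intro i j
  rw [inner_vecMulVec_star, toEuclideanLin_vecMulVec_star, ContinuousLinearMap.coe_coe,
    InnerProductSpace.rankOne_apply, inner_smul_right, hu]
  split_ifs with hij
  · rw [hij, inner_self_eq_norm_sq_to_K, hv, ofReal_one, one_pow, one_mul]
  · rw [mul_zero]

lemma abs_re_inner_vecMulVec_star_le [DecidableEq n] {x : EuclideanSpace 𝕜 m}
    {y : EuclideanSpace 𝕜 n} (hx : ‖x‖ = 1) (hy : ‖y‖ = 1) (A : Matrix m n 𝕜) :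
    |re (inner 𝕜 (vecMulVec x (star y)) A)| ≤ euclideanOpNorm A := by
  rw [inner_vecMulVec_star]
  calc |re (inner 𝕜 x (toEuclideanLin A y))|
      ≤ ‖x‖ * ‖toEuclideanLin A y‖ := (abs_re_le_norm _).trans (norm_inner_le_norm _ _)
    _ ≤ euclideanOpNorm A := by
        rw [hx, one_mul]
        exact (toEuclideanLin A).toContinuousLinearMap.unit_le_opNorm y hy.le

variable [Fintype ι] [DecidableEq n] {u : ι → EuclideanSpace 𝕜 m} {v : ι → EuclideanSpace 𝕜 n}

lemma euclideanOpNorm_sumRankOne_le (hu : Orthonormal 𝕜 u) (hv : Orthonormal 𝕜 v) {s : ι → ℝ}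
    {r : ℝ} (hr : 0 ≤ r) (hs : ∀ i, |s i| ≤ r) : euclideanOpNorm (sumRankOne u v s) ≤ r := by
  have hrankOne : (toEuclideanLin (sumRankOne u v s)).toContinuousLinearMap =
      ∑ i, (s i : 𝕜) • InnerProductSpace.rankOne 𝕜 (u i) (v i) := by
    simp only [sumRankOne, map_sum, map_smul, toEuclideanLin_vecMulVec_star]
    rfl
  rw [euclideanOpNorm, hrankOne]
  exact norm_sum_smul_rankOne_le hu hv hr fun i => (norm_ofReal (s i)).trans_le (hs i)

lemma norm_sumRankOne_clamp_sub_sq_add_le (hu : Orthonormal 𝕜 u) (hv : ∀ i, ‖v i‖ = 1)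
    (s : ι → ℝ) {r : ℝ} {X : Matrix m n 𝕜} (hX : euclideanOpNorm X ≤ r) :
    ‖sumRankOne u v (fun i => clamp r (s i)) - sumRankOne u v s‖ ^ 2 +
        ‖X - sumRankOne u v (fun i => clamp r (s i))‖ ^ 2 ≤
      ‖X - sumRankOne u v s‖ ^ 2 := by
  refine norm_sub_sq_add_norm_sub_sq_le (𝕜 := 𝕜) ?_
  unfold sumRankOne
  rw [re_inner_sum_sub_sum (orthonormal_vecMulVec_star hu hv)]
  exact Finset.sum_nonneg fun i _ => clamp_sub_mul_sub_clamp_nonneg _ <|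
    (abs_re_inner_vecMulVec_star_le (hu.1 i) (hv i) X).trans hX

theorem spectral_clamping_is_projection_general (hu : Orthonormal 𝕜 u) (hv : Orthonormal 𝕜 v)
    (s : ι → ℝ) {r : ℝ} (hr : 0 ≤ r) :
    euclideanOpNorm (sumRankOne u v fun i => clamp r (s i)) ≤ r ∧
    ∀ X : Matrix m n 𝕜, euclideanOpNorm X ≤ r →
      ‖sumRankOne u v (fun i => clamp r (s i)) - sumRankOne u v s‖ ≤ ‖X - sumRankOne u v s‖ ∧
      (X ≠ sumRankOne u v (fun i => clamp r (s i)) →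
        ‖sumRankOne u v (fun i => clamp r (s i)) - sumRankOne u v s‖ <
          ‖X - sumRankOne u v s‖) := by
  refine ⟨euclideanOpNorm_sumRankOne_le hu hv hr fun i => abs_clamp_le hr (s i), fun X hX => ?_⟩
  have hpyth := norm_sumRankOne_clamp_sub_sq_add_le hu hv.1 s hX
  refine ⟨le_of_sq_le_sq ?_ (norm_nonneg _), fun hne => lt_of_pow_lt_pow_left₀ 2 (norm_nonneg _) ?_⟩
  · exact (le_add_of_nonneg_right (sq_nonneg _)).trans hpyth
  · have hpos : 0 < ‖X - sumRankOne u v fun i => clamp r (s i)‖ := norm_sub_pos_iff.mpr hne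
    exact (lt_add_of_pos_right _ (by positivity)).trans_le hpyth

lemma frobNorm_eq_norm {M : ℕ} (A : Matrix (Fin M) (Fin M) ℝ) : frobNorm A = ‖A‖ := by
  rw [← Real.sqrt_sq (norm_nonneg A), frobenius_norm_sq_eq_re_trace,
    conjTranspose_eq_transpose_of_trivial]
  rfl

lemma specNormR_eq_euclideanOpNorm {M : ℕ} (A : Matrix (Fin M) (Fin M) ℝ) :
    specNormR A = euclideanOpNorm A := rfl

end Frobenius

lemma orthonormal_toLp {ι n : Type*} [Fintype n] [DecidableEq ι] {v : ι → n → ℝ}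
    (hv : ∀ a b, v a ⬝ᵥ v b = if a = b then (1 : ℝ) else 0) :
    Orthonormal ℝ fun a => WithLp.toLp 2 (v a) := by
  rw [orthonormal_iff_ite]
  intro a b
  rw [EuclideanSpace.inner_toLp_toLp, star_trivial, dotProduct_comm, hv]

/-- **Spectral clamping is the Frobenius projection onto a spectral-norm ball.**
Let `C ∈ ℝ^{M×M}` be symmetric with spectral decomposition `C = Σₘ λₘ vₘ vₘᵀ` (orthonormal
eigenbasis `{vₘ}`), and let `r > 0`.  Then `Y = Σₘ clamp_r(λₘ) vₘ vₘᵀ` satisfies `‖Y‖ ≤ r`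
and `‖Y - C‖_F ≤ ‖X - C‖_F` for every `X` with `‖X‖ ≤ r`, with equality only when
`X = Y`; i.e., `Y` is the unique Frobenius-norm projection of `C` onto
`{X : ‖X‖ ≤ r}`. -/
theorem spectral_clamping_is_projection
    {M : ℕ} (C : Matrix (Fin M) (Fin M) ℝ) (hC : C = Cᵀ)
    (lam : Fin M → ℝ) (v : Fin M → Fin M → ℝ)
    (hortho : ∀ a b : Fin M, v a ⬝ᵥ v b = if a = b then (1 : ℝ) else 0)
    (hdecomp : C = ∑ m : Fin M, lam m • vecMulVec (v m) (v m))
    (r : ℝ) (hr : 0 < r) :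
    specNormR (∑ m : Fin M, clamp r (lam m) • vecMulVec (v m) (v m)) ≤ r ∧
    ∀ X : Matrix (Fin M) (Fin M) ℝ, specNormR X ≤ r →
      frobNorm ((∑ m : Fin M, clamp r (lam m) • vecMulVec (v m) (v m)) - C) ≤
        frobNorm (X - C) ∧
      (X ≠ ∑ m : Fin M, clamp r (lam m) • vecMulVec (v m) (v m) →
        frobNorm ((∑ m : Fin M, clamp r (lam m) • vecMulVec (v m) (v m)) - C) <
          frobNorm (X - C)) := by
  have hv := orthonormal_toLp hortho
  simpa [hdecomp, sumRankOne, frobNorm_eq_norm, specNormR_eq_euclideanOpNorm] using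
    spectral_clamping_is_projection_general hv hv lam hr.le
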